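/- Let α ∈ (0,1] and let μ be a (1/α)-entropically independent probability distribution on binom([n],k) with marginals p_i = P_{T∼μ}[i∈T]. Let t be an integer with 0 ≤ t ≤ k/2 and let S ∈ binom([n],t) satisfy P_{T∼μ}[S ⊆ T] > 0. Define the conditional marginal distribution μ_{t+1|S} on [n]∖S by μ_{t+1|S}(i) = P_{T∼μ}[i∈T | S⊆T]/(k−t). Then ∑_{i∉S} μ_{t+1|S}(i) · log(k·μ_{t+1|S}(i)/p_i) ≤ (2/(αk))·log(1/P_{T∼μ}[S⊆T]) + 2t/k. -/

import Mathlib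

open Finset

/-! Conditioning `μ` on `S ⊆ T` gives a distribution `ν` with `DKL(ν ‖ μ) = log (1 / P[S ⊆ T])`, and
entropic independence turns this into a bound on the divergence of the marginals of `ν` from those
of `μ`. The coordinates in `S` have marginal `1` under `ν`, so they contribute nonnegatively and can
be discarded. The remaining marginals of `ν` have total mass `k - |S|`; normalizing them by
`k - |S|` instead of `k` costs an additive `log (k / (k - |S|))`. -/

/-- The Kullback–Leibler divergence of two nonnegative vectors restricted to the coordinates in `s`.
The conventions of `Real.log` and of division make a term `0` as soon as `q i = 0` or `p i = 0`, so
it is the true divergence only if `q` vanishes wherever `p` does. -/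
noncomputable def klSum {ι : Type*} (s : Finset ι) (q p : ι → ℝ) : ℝ :=
  ∑ i ∈ s, q i * Real.log (q i / p i)

lemma klSum_div_div {ι : Type*} {s : Finset ι} {q p : ι → ℝ} {a b : ℝ} (ha : a ≠ 0) (hb : b ≠ 0)
    (hqp : ∀ i ∈ s, p i = 0 → q i = 0) :
    klSum s (fun i => q i / a) (fun i => p i / b) =
      (klSum s q p + (∑ i ∈ s, q i) * Real.log (b / a)) / a := by
  rw [klSum, klSum, sum_mul, ← sum_add_distrib, sum_div]
  refine sum_congr rfl fun i hi => ?_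
  by_cases hq : q i = 0
  · simp [hq]
  · have hp : p i ≠ 0 := mt (hqp i hi) hq
    rw [div_div_div_comm, div_eq_mul_inv (q i / p i), inv_div,
      Real.log_mul (div_ne_zero hq hp) (div_ne_zero hb ha)]
    ring

section Conditioning

variable {Ω : Type*} [Fintype Ω] {w : Ω → ℝ} {E : Ω → Prop} [DecidablePred E]

lemma sum_filter_le_one_of_mem_stdSimplex (hw : w ∈ stdSimplex ℝ Ω) : ∑ x with E x, w x ≤ 1 :=
  hw.2 ▸ sum_le_sum_of_subset_of_nonneg (filter_subset _ _) fun x _ _ => hw.1 x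

variable (w E) in
/-- The distribution obtained by conditioning the weight `w` on the event `E`; it is the zero vector
if `E` has total weight `0`. -/
noncomputable def condOn (x : Ω) : ℝ :=
  if E x then w x / ∑ y with E y, w y else 0

lemma condOn_eq_zero_of_eq_zero {x : Ω} (hx : w x = 0) : condOn w E x = 0 := by
  simp [condOn, hx]

lemma of_condOn_ne_zero {x : Ω} (hx : condOn w E x ≠ 0) : E x :=
  of_not_not fun hE => hx (if_neg hE)

lemma sum_filter_condOn (F : Ω → Prop) [DecidablePred F] :
    ∑ x with F x, condOn w E x = (∑ x with E x ∧ F x, w x) / ∑ x with E x, w x := by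
  simp only [condOn]
  rw [← sum_filter, filter_filter, sum_div]
  simp only [and_comm]

lemma condOn_mem_stdSimplex (hw : ∀ x, 0 ≤ w x) (hE : 0 < ∑ x with E x, w x) :
    condOn w E ∈ stdSimplex ℝ Ω := by
  constructor
  · intro x
    unfold condOn
    split_ifs
    exacts [div_nonneg (hw x) hE.le, le_rfl]
  · simp only [condOn]
    rw [← sum_filter, ← sum_div, div_self hE.ne']

lemma klSum_condOn (hE : ∑ x with E x, w x ≠ 0) :
    klSum univ (condOn w E) w = Real.log (1 / ∑ x with E x, w x) := by
  have hterm (x : Ω) : condOn w E x * Real.log (condOn w E x / w x) =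
      if E x then w x / (∑ y with E y, w y) * Real.log (1 / ∑ y with E y, w y) else 0 := by
    unfold condOn
    split_ifs
    · by_cases hx : w x = 0
      · simp [hx]
      · rw [div_div_cancel_left' hx, one_div]
    · exact zero_mul _
  simp_rw [klSum, hterm]
  rw [← sum_filter, ← sum_mul, ← sum_div, div_self hE, one_mul]

end Conditioning

section Marginal

variable {ι : Type*} [Fintype ι] [DecidableEq ι] {μ ν : Finset ι → ℝ} {i : ι} {S : Finset ι} {k : ℕ}

/-- The marginal `P[i ∈ T]` of a random set `T` with distribution `μ`. For a distribution on
`k`-sets, `marginal μ i / k` is the image of `μ` under the down operator to singletons. -/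
def marginal (μ : Finset ι → ℝ) (i : ι) : ℝ :=
  ∑ T with i ∈ T, μ T

lemma marginal_nonneg (hμ : ∀ T, 0 ≤ μ T) (i : ι) : 0 ≤ marginal μ i :=
  sum_nonneg fun T _ => hμ T

lemma marginal_eq_zero_of_eq_zero (hμ : ∀ T, 0 ≤ μ T) (hνμ : ∀ T, μ T = 0 → ν T = 0)
    (hi : marginal μ i = 0) : marginal ν i = 0 :=
  sum_eq_zero fun T hT => hνμ T ((sum_eq_zero_iff_of_nonneg fun T _ => hμ T).1 hi T hT)

lemma sum_marginal (hν : (Function.support ν).Sized k) :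
    ∑ i, marginal ν i = k * ∑ T, ν T := by
  simp_rw [marginal, sum_filter]
  rw [sum_comm, mul_sum]
  refine sum_congr rfl fun T _ => ?_
  rw [← sum_filter, sum_const, nsmul_eq_mul, filter_univ_mem]
  by_cases hT : ν T = 0
  · simp [hT]
  · rw [hν hT]

lemma marginal_eq_sum_of_mem (hS : ∀ T, ν T ≠ 0 → S ⊆ T) (hi : i ∈ S) :
    marginal ν i = ∑ T, ν T :=
  sum_filter_of_ne fun T _ hT => hS T hT hi

lemma sum_sdiff_marginal (hν : ν ∈ stdSimplex ℝ (Finset ι)) (hνk : (Function.support ν).Sized k)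
    (hS : ∀ T, ν T ≠ 0 → S ⊆ T) : ∑ i ∈ univ \ S, marginal ν i = k - #S := by
  have hall : ∑ i, marginal ν i = k := by rw [sum_marginal hνk, hν.2, mul_one]
  have hin : ∑ i ∈ S, marginal ν i = #S := by
    rw [sum_congr rfl fun i hi => (marginal_eq_sum_of_mem hS hi).trans hν.2, card_eq_sum_ones]
    push_cast
    rfl
  rw [sum_sdiff_eq_sub (subset_univ S), hall, hin]

lemma klSum_marginal_nonneg (hμ : μ ∈ stdSimplex ℝ (Finset ι)) (hν : ν ∈ stdSimplex ℝ (Finset ι))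
    (hS : ∀ T, ν T ≠ 0 → S ⊆ T) : 0 ≤ klSum S (marginal ν) (marginal μ) := by
  refine sum_nonneg fun i hi => ?_
  rw [marginal_eq_sum_of_mem hS hi, hν.2, one_mul, one_div, Real.log_inv, neg_nonneg]
  exact Real.log_nonpos (marginal_nonneg hμ.1 i) (sum_filter_le_one_of_mem_stdSimplex hμ)

end Marginal

section EntropicIndependence

variable {ι : Type*} [Fintype ι] [DecidableEq ι] {μ ν : Finset ι → ℝ} {S : Finset ι} {k : ℕ} {C : ℝ}

/-- `C`-entropic independence of a distribution `μ` on `k`-sets; the paper's `1/α` is `C`. Only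
`ν` absolutely continuous with respect to `μ` are tested, since otherwise `DKL(ν ‖ μ) = ∞`, which
`klSum` does not see. -/
def IsEntropicallyIndependent (C : ℝ) (k : ℕ) (μ : Finset ι → ℝ) : Prop :=
  ∀ ν ∈ stdSimplex ℝ (Finset ι), (Function.support ν).Sized k → (∀ T, μ T = 0 → ν T = 0) →
    klSum univ (fun i => marginal ν i / k) (fun i => marginal μ i / k) ≤ C / k * klSum univ ν μ

lemma IsEntropicallyIndependent.klSum_marginal_le (hEI : IsEntropicallyIndependent C k μ)
    (hμ : ∀ T, 0 ≤ μ T) (hν : ν ∈ stdSimplex ℝ (Finset ι)) (hνk : (Function.support ν).Sized k)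
    (hνμ : ∀ T, μ T = 0 → ν T = 0) (hk : 0 < k) :
    klSum univ (marginal ν) (marginal μ) ≤ C * klSum univ ν μ := by
  have hk' : (0 : ℝ) < k := Nat.cast_pos.2 hk
  have h := hEI ν hν hνk hνμ
  rwa [klSum_div_div hk'.ne' hk'.ne' fun i _ => marginal_eq_zero_of_eq_zero hμ hνμ,
    div_self hk'.ne', Real.log_one, mul_zero, add_zero, div_mul_eq_mul_div,
    div_le_div_iff_of_pos_right hk'] at h

lemma IsEntropicallyIndependent.klSum_sdiff_marginal_le (hEI : IsEntropicallyIndependent C k μ)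
    (hμ : μ ∈ stdSimplex ℝ (Finset ι)) (hν : ν ∈ stdSimplex ℝ (Finset ι))
    (hνk : (Function.support ν).Sized k) (hνμ : ∀ T, μ T = 0 → ν T = 0)
    (hS : ∀ T, ν T ≠ 0 → S ⊆ T) (hSk : #S < k) :
    klSum (univ \ S) (fun i => marginal ν i / (k - #S)) (fun i => marginal μ i / k) ≤
      C / (k - #S) * klSum univ ν μ + Real.log (k / (k - #S)) := by
  have hk : 0 < k := hSk.pos
  have hk' : (k : ℝ) ≠ 0 := Nat.cast_ne_zero.2 hk.ne'
  have hkS : (0 : ℝ) < k - #S := sub_pos.2 (Nat.cast_lt.2 hSk)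
  have hsplit : klSum (univ \ S) (marginal ν) (marginal μ) + klSum S (marginal ν) (marginal μ) =
      klSum univ (marginal ν) (marginal μ) := sum_sdiff (subset_univ S)
  have hkl : klSum (univ \ S) (marginal ν) (marginal μ) ≤ C * klSum univ ν μ :=
    (le_of_add_le_of_nonneg_left hsplit.le (klSum_marginal_nonneg hμ hν hS)).trans
      (hEI.klSum_marginal_le hμ.1 hν hνk hνμ hk)
  calc klSum (univ \ S) (fun i => marginal ν i / (k - #S)) (fun i => marginal μ i / k)
      = (klSum (univ \ S) (marginal ν) (marginal μ) + (k - #S) * Real.log (k / (k - #S))) /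
          (k - #S) := by
        rw [klSum_div_div hkS.ne' hk' fun i _ => marginal_eq_zero_of_eq_zero hμ.1 hνμ,
          sum_sdiff_marginal hν hνk hS]
    _ ≤ (C * klSum univ ν μ + (k - #S) * Real.log (k / (k - #S))) / (k - #S) := by gcongr
    _ = C / (k - #S) * klSum univ ν μ + Real.log (k / (k - #S)) := by
        rw [add_div, mul_div_cancel_left₀ _ hkS.ne', div_mul_eq_mul_div]

theorem cond_marginal_kl_bound_general (hμ : μ ∈ stdSimplex ℝ (Finset ι))
    (hμk : (Function.support μ).Sized k) (hEI : IsEntropicallyIndependent C k μ)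
    {p : ι → ℝ} (hp : ∀ i, p i = marginal μ i) (hSk : #S < k) (hpos : 0 < ∑ T with S ⊆ T, μ T)
    {q : ι → ℝ}
    (hq : ∀ i, q i = (∑ T with S ⊆ T ∧ i ∈ T, μ T) / (∑ T with S ⊆ T, μ T) / ((k : ℝ) - #S)) :
    ∑ i ∈ univ \ S, q i * Real.log (k * q i / p i) ≤
      C / (k - #S) * Real.log (1 / ∑ T with S ⊆ T, μ T) + Real.log (k / (k - #S)) := by
  let ν := condOn μ (S ⊆ ·)
  have hq' (i : ι) : q i = marginal ν i / (k - #S) := by rw [hq, marginal, sum_filter_condOn]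
  have hνμ (T : Finset ι) : μ T = 0 → ν T = 0 := condOn_eq_zero_of_eq_zero
  calc ∑ i ∈ univ \ S, q i * Real.log (k * q i / p i)
      = klSum (univ \ S) (fun i => marginal ν i / (k - #S)) (fun i => marginal μ i / k) := by
        simp only [klSum, ← hq', ← hp, div_div_eq_mul_div, mul_comm (k : ℝ)]
    _ ≤ C / (k - #S) * klSum univ ν μ + Real.log (k / (k - #S)) :=
        hEI.klSum_sdiff_marginal_le hμ (condOn_mem_stdSimplex hμ.1 hpos)
          (fun T hT => hμk (mt (hνμ T) hT)) hνμ (fun _ => of_condOn_ne_zero) hSk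
    _ = C / (k - #S) * Real.log (1 / ∑ T with S ⊆ T, μ T) + Real.log (k / (k - #S)) := by
        rw [klSum_condOn hpos.ne']

end EntropicIndependence

lemma div_sub_le_two_mul_div {k t c : ℝ} (hk : 0 < k) (ht : 2 * t ≤ k) (hc : 0 ≤ c) :
    c / (k - t) ≤ 2 * c / k := by
  have hkt : k / 2 ≤ k - t := by linarith
  calc c / (k - t) ≤ c / (k / 2) := by gcongr
    _ = 2 * c / k := by rw [div_div_eq_mul_div, mul_comm]

lemma log_div_sub_le_two_mul_div {k t : ℝ} (hk : 0 < k) (ht₀ : 0 ≤ t) (ht : 2 * t ≤ k) :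
    Real.log (k / (k - t)) ≤ 2 * t / k := by
  have hkt : 0 < k - t := by linarith
  calc Real.log (k / (k - t)) ≤ k / (k - t) - 1 := Real.log_le_sub_one_of_pos (div_pos hk hkt)
    _ = t / (k - t) := by rw [div_sub_one hkt.ne', sub_sub_cancel]
    _ ≤ 2 * t / k := div_sub_le_two_mul_div hk ht ht₀

/-- KL-divergence bound on the conditional marginal distribution of an
entropically independent distribution:
`DKL(μ_{t+1|S} ‖ p/k) ≤ (2/(αk))·log(1/P[S⊆T]) + 2t/k`. -/
theorem cond_marginal_kl_bound (n k : ℕ) (hk : 0 < k)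
    (α : ℝ) (hα : α ∈ Set.Ioc (0 : ℝ) 1)
    (μ : Finset (Fin n) → ℝ)
    (hnn : ∀ S, 0 ≤ μ S) (hsupp : ∀ S, μ S ≠ 0 → S.card = k)
    (hsum : ∑ S, μ S = 1)
    -- μ is (1/α)-entropically independent
    (hEI : ∀ ν : Finset (Fin n) → ℝ, (∀ S, 0 ≤ ν S) → (∀ S, ν S ≠ 0 → S.card = k) →
      (∑ S, ν S = 1) → (∀ S, μ S = 0 → ν S = 0) →
      ∑ i : Fin n,
          ((∑ S ∈ univ.filter (fun S : Finset (Fin n) => i ∈ S), ν S) / k) *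
            Real.log (((∑ S ∈ univ.filter (fun S : Finset (Fin n) => i ∈ S), ν S) / k) /
              ((∑ S ∈ univ.filter (fun S : Finset (Fin n) => i ∈ S), μ S) / k)) ≤
        1 / (α * k) * ∑ S, ν S * Real.log (ν S / μ S))
    (p : Fin n → ℝ)
    (hp : ∀ i, p i = ∑ S ∈ univ.filter (fun S : Finset (Fin n) => i ∈ S), μ S)
    (t : ℕ) (ht : 2 * t ≤ k)
    (S : Finset (Fin n)) (hS : S.card = t)
    (hpos : 0 < ∑ T ∈ univ.filter (fun T : Finset (Fin n) => S ⊆ T), μ T)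
    -- conditional marginal distribution μ_{t+1|S}
    (q : Fin n → ℝ)
    (hq : ∀ i, q i =
      (∑ T ∈ univ.filter (fun T : Finset (Fin n) => S ⊆ T ∧ i ∈ T), μ T) /
        (∑ T ∈ univ.filter (fun T : Finset (Fin n) => S ⊆ T), μ T) / ((k : ℝ) - t)) :
    ∑ i ∈ univ \ S, q i * Real.log ((k : ℝ) * q i / p i) ≤
      2 / (α * k) *
          Real.log (1 / ∑ T ∈ univ.filter (fun T : Finset (Fin n) => S ⊆ T), μ T) +
        2 * t / k := by
  subst hS
  have hkR : (0 : ℝ) < k := Nat.cast_pos.2 hk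
  have htR : 2 * (#S : ℝ) ≤ k := by exact_mod_cast ht
  have hμ : μ ∈ stdSimplex ℝ (Finset (Fin n)) := ⟨hnn, hsum⟩
  have hlog : 0 ≤ Real.log (1 / ∑ T with S ⊆ T, μ T) :=
    Real.log_nonneg (one_le_one_div hpos (sum_filter_le_one_of_mem_stdSimplex hμ))
  have hEI' : IsEntropicallyIndependent (1 / α) k μ := fun ν hν hνk hνμ => by
    rw [div_div]
    exact hEI ν hν.1 hνk hν.2 hνμ
  calc ∑ i ∈ univ \ S, q i * Real.log (k * q i / p i)
      ≤ 1 / α / (k - #S) * Real.log (1 / ∑ T with S ⊆ T, μ T) + Real.log (k / (k - #S)) :=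
        cond_marginal_kl_bound_general hμ hsupp hEI' hp (by lia) hpos hq
    _ ≤ 2 * (1 / α) / k * Real.log (1 / ∑ T with S ⊆ T, μ T) + 2 * #S / k :=
        add_le_add
          (mul_le_mul_of_nonneg_right
            (div_sub_le_two_mul_div hkR htR (one_div_nonneg.2 hα.1.le)) hlog)
          (log_div_sub_le_two_mul_div hkR (Nat.cast_nonneg _) htR)
    _ = 2 / (α * k) * Real.log (1 / ∑ T with S ⊆ T, μ T) + 2 * #S / k := by
        rw [mul_one_div, div_div]
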